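/- The Heisenberg group ℋ₃(ℤ) belongs to the class ℬ_𝔢, where 𝔢 is the exponential function 𝔢(n) = exp(n). -/

import Mathlib

namespace CAG

/-- The convolution `w₁ ⊗ w₂` of two words, over the padded alphabet
`(Σ ∪ {⋄})²`, modelled as `Option α × Option α` where `none` is the padding symbol `⋄`. -/
def conv {α : Type*} : List α → List α → List (Option α × Option α)
  | [], [] => []
  | a :: as, [] => (some a, none) :: conv as []
  | [], b :: bs => (none, some b) :: conv [] bs
  | a :: as, b :: bs => (some a, some b) :: conv as bs

/-- A binary relation on words is regular if the language of convolutions of its pairs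
is a regular language. -/
def IsRegularRel {α : Type*} (R : Set (List α × List α)) : Prop :=
  Language.IsRegular {w | ∃ p ∈ R, w = conv p.1 p.2}

variable {G : Type*} [Group G]

/-- The alphabet `S = A ∪ A⁻¹` associated to a generating set `A ⊆ G`. -/
def Alph (A : Set G) : Type _ := {x : G // x ∈ A ∪ A⁻¹}

/-- The canonical evaluation map `π : S* → G`. -/
def eval (A : Set G) (w : List (Alph A)) : G := (w.map Subtype.val).prod

/-- The word length `d_A(g)` of `g` with respect to the generating set `A`. -/
noncomputable def wordLength (A : Set G) (g : G) : ℕ :=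
  sInf {n | ∃ w : List (Alph A), eval A w = g ∧ w.length = n}

/-- The distance `d_A(g₁, g₂)` in the Cayley graph of `G` with respect to `A`. -/
noncomputable def cayleyDist (A : Set G) (g₁ g₂ : G) : ℕ := wordLength A (g₁⁻¹ * g₂)

/-- `ψ : L → G` is a Cayley automatic representation of `G` (w.r.t. the
generating set `A`): `L ⊆ S*` is regular, `ψ` is a bijection from `L` onto `G`, and for every
`a ∈ A` the relation `R_a = {(ψ⁻¹(g), ψ⁻¹(g·a)) : g ∈ G}` is regular. -/
def IsCayleyAutomaticRep (A : Set G) (L : Language (Alph A)) (ψ : List (Alph A) → G) : Prop :=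
  Language.IsRegular L ∧ Set.BijOn ψ L Set.univ ∧
    ∀ a ∈ A, IsRegularRel {p : List (Alph A) × List (Alph A) |
      p.1 ∈ L ∧ p.2 ∈ L ∧ ψ p.2 = ψ p.1 * a}

/-- `G` is Cayley automatic with respect to the generating set `A`. -/
def IsCayleyAutomatic (A : Set G) : Prop :=
  ∃ (L : Language (Alph A)) (ψ : List (Alph A) → G), IsCayleyAutomaticRep A L ψ

/-- `G` is automatic (in the sense of Thurston) with respect to the generating set `A`:
there is a regular language `L ⊆ S*` on which the canonical evaluation map `π` is a bijection
onto `G` and all the relations `R_a`, `a ∈ A`, are regular. -/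
def IsAutomatic (A : Set G) : Prop :=
  ∃ L : Language (Alph A), IsCayleyAutomaticRep A L (eval A)

/-- The family `𝔉` of non-decreasing, non-negative real valued functions defined on a
final segment `[Q, ∞)` of `ℕ` (values below `Q` are irrelevant junk values). -/
structure FFun where
  Q : ℕ
  toFun : ℕ → ℝ
  nonneg : ∀ n, Q ≤ n → 0 ≤ toFun n
  mono : ∀ m n, Q ≤ m → m ≤ n → toFun m ≤ toFun n

/-- `h ⪯ f` : there are positive integers `K, M, N`, with `[N,∞)` contained in the domains of
`h` and `f`, such that `h(n) ≤ K·f(M·n)` for all `n ≥ N`. -/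
def FFun.Preceq (h f : FFun) : Prop :=
  ∃ K M N : ℕ, 0 < K ∧ 0 < M ∧ 0 < N ∧ h.Q ≤ N ∧ f.Q ≤ N ∧
    ∀ n, N ≤ n → h.toFun n ≤ K * f.toFun (M * n)

/-- `h ≍ f` iff `h ⪯ f` and `f ⪯ h`. -/
def FFun.Equiv (h f : FFun) : Prop := h.Preceq f ∧ f.Preceq h

/-- `h ≺ f` iff `h ⪯ f` and not `h ≍ f`. -/
def FFun.Prec (h f : FFun) : Prop := h.Preceq f ∧ ¬ h.Equiv f

/-- `G ∈ ℬ_f` with respect to the generating set `A`: there is a Cayley automatic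
representation `ψ : L → G` such that the function
`h(n) = max{d_A(π(w), ψ(w)) : w ∈ L, |w| ≤ n}` satisfies `h ⪯ f`
(stated equivalently: for some positive `K, M, N` with `N ≥ Q_f`, every `w ∈ L` with `|w| ≤ n`
and `n ≥ N` satisfies `d_A(π(w), ψ(w)) ≤ K·f(M·n)`). -/
def InB (A : Set G) (f : FFun) : Prop :=
  ∃ (L : Language (Alph A)) (ψ : List (Alph A) → G),
    IsCayleyAutomaticRep A L ψ ∧
    ∃ K M N : ℕ, 0 < K ∧ 0 < M ∧ 0 < N ∧ f.Q ≤ N ∧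
      ∀ n, N ≤ n → ∀ w ∈ L, w.length ≤ n →
        (cayleyDist A (eval A w) (ψ w) : ℝ) ≤ K * f.toFun (M * n)

/-- The identity function `𝔦(n) = n` as an element of `𝔉`. -/
def identF : FFun where
  Q := 1
  toFun n := n
  nonneg n _ := by positivity
  mono m n _ h := by simpa using (Nat.cast_le (α := ℝ)).mpr h

/-- The exponential function `𝔢(n) = exp n` as an element of `𝔉`. -/
noncomputable def expF : FFun where
  Q := 1
  toFun n := Real.exp n
  nonneg n _ := (Real.exp_pos n).le
  mono m n _ h := Real.exp_le_exp.mpr (by exact_mod_cast h)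

end CAG
namespace CAG

/-- The Heisenberg group `ℋ₃(ℤ)` of `3×3` upper unitriangular integer matrices, an element
being identified with the triple `(x, y, z)` of its upper-right entries, with multiplication
`(x,y,z)·(x',y',z') = (x+x', y+y', z+z'+x·y')`. -/
@[ext] structure Heis where
  x : ℤ
  y : ℤ
  z : ℤ

instance : Mul Heis := ⟨fun g h => ⟨g.x + h.x, g.y + h.y, g.z + h.z + g.x * h.y⟩⟩
instance : One Heis := ⟨⟨0, 0, 0⟩⟩
instance : Inv Heis := ⟨fun g => ⟨-g.x, -g.y, -g.z + g.x * g.y⟩⟩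

lemma Heis.mul_def (g h : Heis) :
    g * h = ⟨g.x + h.x, g.y + h.y, g.z + h.z + g.x * h.y⟩ := rfl
lemma Heis.one_def : (1 : Heis) = ⟨0, 0, 0⟩ := rfl
lemma Heis.inv_def (g : Heis) : g⁻¹ = ⟨-g.x, -g.y, -g.z + g.x * g.y⟩ := rfl

instance : Group Heis where
  mul_assoc a b c := by
    simp only [Heis.mul_def]
    ext <;> dsimp <;> ring
  one_mul a := by simp only [Heis.mul_def, Heis.one_def]; ext <;> dsimp <;> ring
  mul_one a := by simp only [Heis.mul_def, Heis.one_def]; ext <;> dsimp <;> ring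
  inv_mul_cancel a := by
    simp only [Heis.mul_def, Heis.inv_def, Heis.one_def]
    ext <;> dsimp <;> ring

/-- The generator `s = (1,0,0)` of `ℋ₃(ℤ)`. -/
def Heis.s : Heis := ⟨1, 0, 0⟩
/-- The generator `p = (0,1,0)` of `ℋ₃(ℤ)`. -/
def Heis.p : Heis := ⟨0, 1, 0⟩
/-- The generator `q = (0,0,1)` of `ℋ₃(ℤ)`. -/
def Heis.q : Heis := ⟨0, 0, 1⟩

end CAG

/-!
A word over the six letters of `S` is read as the string of base-`θ` digits, least significant
first, of an element `x + y θ + z θ²` of `ℤ[θ]`, where `θ³ = 6` and the letters are in bijection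
with the digits `-2, …, 3`; this element is the triple `(x, y, z)` of `ℋ₃(ℤ)`. In other words, the
base-`6` digits of the three coordinates are interleaved. Words without a trailing zero digit
represent every triple exactly once.

Right multiplication by a generator is an affine map adding to each coordinate a constant and at
most a copy of another coordinate, so a finite automaton can check it digit by digit with bounded
carries. Finally, a word of length `n` has coordinates less than `6 ^ n`, and a triple `(x, y, z)`
has word length at most `|x| + |y| + |z - x y|`.
-/

namespace CAG

/-! ### Regular languages and regular relations -/

section Regular

variable {α : Type*}

lemma isRegular_of_mem_finite {F : Set (Language α)} (hF : F.Finite)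
    (hquot : ∀ K ∈ F, ∀ a, K.leftQuotient [a] ∈ F) {K : Language α} (hK : K ∈ F) :
    K.IsRegular := by
  refine .of_finite_range_leftQuotient (hF.subset ?_)
  rintro _ ⟨w, rfl⟩
  induction w generalizing K with
  | nil => exact hK
  | cons a _ ih => exact ih (hquot K hK a)

lemma isRegular_setOf_forall_mem_getLast? (P : α → Prop) :
    Language.IsRegular {w : List α | ∀ a ∈ w.getLast?, P a} := by
  let M : DFA α Prop := ⟨fun _ a => P a, True, {q | q}⟩
  refine ⟨Prop, inferInstance, M, Language.ext fun w => ?_⟩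
  change _ ↔ ∀ a ∈ w.getLast?, P a
  induction w using List.reverseRecOn with
  | nil => simp [DFA.mem_accepts, M]
  | append_singleton w a => simp [DFA.mem_accepts, M]

/-- The language of all convolutions `u ⊗ v` with `u ∈ L` and `v ∈ L'`. -/
def convLang (L L' : Language α) : Language (Option α × Option α) :=
  {w | ∃ u ∈ L, ∃ v ∈ L', conv u v = w}

/-- The left quotient of a language of padded words by a possibly padding letter: the padding
symbol may only be read once the word itself is exhausted. -/
def padQuotient (L : Language α) : Option α → Language α
  | some a => L.leftQuotient [a]
  | none => L ⊓ 1

lemma leftQuotient_convLang_none_none (L L' : Language α) :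
    (convLang L L').leftQuotient [(none, none)] = convLang 0 0 := by
  ext w
  refine ⟨?_, fun ⟨_, hu, _⟩ => hu.elim⟩
  rintro ⟨_ | ⟨a, u⟩, -, _ | ⟨b, v⟩, -, h⟩ <;> simp [conv] at h

lemma leftQuotient_convLang {a b : Option α} (hab : (a, b) ≠ (none, none)) (L L' : Language α) :
    (convLang L L').leftQuotient [(a, b)] = convLang (padQuotient L a) (padQuotient L' b) := by
  ext w
  constructor
  · rintro ⟨_ | ⟨c, u⟩, hu, _ | ⟨d, v⟩, hv, h⟩ <;>
      simp only [conv, List.cons_append, List.nil_append, List.cons.injEq, Prod.mk.injEq,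
        reduceCtorEq] at h
    · obtain ⟨⟨rfl, rfl⟩, rfl⟩ := h
      exact ⟨[], ⟨hu, rfl⟩, v, hv, rfl⟩
    · obtain ⟨⟨rfl, rfl⟩, rfl⟩ := h
      exact ⟨u, hu, [], ⟨hv, rfl⟩, rfl⟩
    · obtain ⟨⟨rfl, rfl⟩, rfl⟩ := h
      exact ⟨u, hu, v, hv, rfl⟩
  · rintro ⟨u, hu, v, hv, rfl⟩
    rcases a with _ | a <;> rcases b with _ | b
    · exact absurd rfl hab
    · obtain ⟨hL, rfl⟩ := hu
      exact ⟨[], hL, b :: v, hv, by simp [conv]⟩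
    · obtain ⟨hL', rfl⟩ := hv
      exact ⟨a :: u, hu, [], hL', by simp [conv]⟩
    · exact ⟨a :: u, hu, b :: v, hv, by simp [conv]⟩

lemma exists_finite_padQuotient_closed {L : Language α} (hL : L.IsRegular) :
    ∃ F : Set (Language α), F.Finite ∧ L ∈ F ∧ 0 ∈ F ∧ ∀ K ∈ F, ∀ a, padQuotient K a ∈ F := by
  refine ⟨Set.range L.leftQuotient ∪ {0, 1}, hL.finite_range_leftQuotient.union (Set.toFinite _),
    .inl ⟨[], rfl⟩, .inr (.inl rfl), ?_⟩
  rintro K hK (_ | a)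
  · refine .inr ?_
    by_cases h : [] ∈ K
    · exact .inr (inf_eq_right.mpr fun w (hw : w = []) => hw ▸ h)
    · exact .inl (Language.ext fun w => ⟨fun ⟨hw, e⟩ => h (e ▸ hw), False.elim⟩)
  · rcases hK with ⟨w, rfl⟩ | rfl | rfl
    · exact .inl ⟨w ++ [a], L.leftQuotient_append w [a]⟩
    · exact .inr (.inl rfl)
    · exact .inr (.inl (Language.ext fun w => by simp [padQuotient, Language.mem_one]))

lemma isRegular_convLang {L L' : Language α} (hL : L.IsRegular) (hL' : L'.IsRegular) :
    (convLang L L').IsRegular := by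
  obtain ⟨F, hF, hLF, h0, hquot⟩ := exists_finite_padQuotient_closed hL
  obtain ⟨F', hF', hLF', h0', hquot'⟩ := exists_finite_padQuotient_closed hL'
  refine isRegular_of_mem_finite (hF.image2 convLang hF') ?_ (Set.mem_image2_of_mem hLF hLF')
  rintro _ ⟨K, hK, K', hK', rfl⟩ ⟨a, b⟩
  by_cases hab : (a, b) = (none, none)
  · rw [hab, leftQuotient_convLang_none_none]
    exact Set.mem_image2_of_mem h0 h0'
  · rw [leftQuotient_convLang hab]
    exact Set.mem_image2_of_mem (hquot K hK a) (hquot' K' hK' b)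

lemma isRegularRel_of_conv_mem_iff {L L' : Language α} {K : Language (Option α × Option α)}
    (hL : L.IsRegular) (hL' : L'.IsRegular) (hK : K.IsRegular) {R : List α → List α → Prop}
    (hR : ∀ u v, conv u v ∈ K ↔ R u v) :
    IsRegularRel {p | p.1 ∈ L ∧ p.2 ∈ L' ∧ R p.1 p.2} := by
  have h : {w | ∃ p ∈ {p : List α × List α | p.1 ∈ L ∧ p.2 ∈ L' ∧ R p.1 p.2},
      w = conv p.1 p.2} = convLang L L' ⊓ K := by
    ext w
    constructor
    · rintro ⟨⟨u, v⟩, ⟨hu, hv, huv⟩, rfl⟩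
      exact ⟨⟨u, hu, v, hv, rfl⟩, (hR u v).mpr huv⟩
    · rintro ⟨⟨u, hu, v, hv, rfl⟩, hw⟩
      exact ⟨(u, v), ⟨hu, hv, (hR u v).mp hw⟩, rfl⟩
  rw [IsRegularRel, h]
  exact (isRegular_convLang hL hL').inf hK

end Regular

/-! ### Interleaved base-six expansions -/

section Digits

variable {D : Type*} (dig : D → ℤ)

/-- The triple `(x, y, z)` with `x + y θ + z θ² = ∑ i, dig (w i) θ ^ i`, where `θ ^ 3 = 6`: the
recursion is multiplication by `θ` followed by addition of the least significant digit. -/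
def ofDigits : List D → Heis
  | [] => 1
  | a :: w => ⟨dig a + 6 * (ofDigits w).z, (ofDigits w).x, (ofDigits w).y⟩

/-- A word is reduced if its most significant digit, which is its last one, is nonzero. -/
def IsReduced (w : List D) : Prop := ∀ a ∈ w.getLast?, dig a ≠ 0

variable {dig}

lemma isReduced_nil : IsReduced dig [] := by simp [IsReduced]

lemma isRegular_setOf_isReduced : Language.IsRegular {w | IsReduced dig w} :=
  isRegular_setOf_forall_mem_getLast? (dig · ≠ 0)

lemma isReduced_cons {a : D} {w : List D} :
    IsReduced dig (a :: w) ↔ IsReduced dig w ∧ (w = [] → dig a ≠ 0) := by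
  cases w <;> simp [IsReduced]

lemma ofDigits_cons_eq_one_iff {a : D} (ha : |dig a| < 6) {w : List D} :
    ofDigits dig (a :: w) = 1 ↔ dig a = 0 ∧ ofDigits dig w = 1 := by
  rw [abs_lt] at ha
  simp only [ofDigits, Heis.one_def, Heis.ext_iff]
  omega

lemma ofDigits_cons_eq_ofDigits_cons_iff {a b : D} (hab : |dig a - dig b| < 6) {u v : List D} :
    ofDigits dig (a :: u) = ofDigits dig (b :: v) ↔
      dig a = dig b ∧ ofDigits dig u = ofDigits dig v := by
  rw [abs_lt] at hab
  simp only [ofDigits, Heis.ext_iff]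
  omega

lemma IsReduced.eq_nil_of_ofDigits_eq_one (hdig : ∀ a, |dig a| < 6) {w : List D}
    (hw : IsReduced dig w) (h : ofDigits dig w = 1) : w = [] := by
  induction w with
  | nil => rfl
  | cons a w ih =>
    rw [isReduced_cons] at hw
    rw [ofDigits_cons_eq_one_iff (hdig a)] at h
    exact absurd h.1 (hw.2 (ih hw.1 h.2))

lemma injOn_ofDigits (hinj : Function.Injective dig) (hdig : ∀ a, |dig a| < 6)
    (hsub : ∀ a b, |dig a - dig b| < 6) : Set.InjOn (ofDigits dig) {w | IsReduced dig w} := by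
  intro u hu v hv h
  induction u generalizing v with
  | nil => exact (hv.eq_nil_of_ofDigits_eq_one hdig h.symm).symm
  | cons a u ih =>
    cases v with
    | nil => exact hu.eq_nil_of_ofDigits_eq_one hdig h
    | cons b v =>
      obtain ⟨hab, huv⟩ := (ofDigits_cons_eq_ofDigits_cons_iff (hsub a b)).mp h
      rw [hinj hab, ih (isReduced_cons.mp hu).1 (isReduced_cons.mp hv).1 huv]

lemma exists_isReduced_ofDigits_eq (hsurj : Set.Icc (-2) 3 ⊆ Set.range dig) (g : Heis) :
    ∃ w, IsReduced dig w ∧ ofDigits dig w = g := by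
  by_cases hg : g = 1
  · exact ⟨[], isReduced_nil, hg.symm⟩
  obtain ⟨a, ha⟩ := hsurj (show (g.x + 2) % 6 - 2 ∈ Set.Icc (-2) 3 by rw [Set.mem_Icc]; omega)
  obtain ⟨w, hw, hwg⟩ := exists_isReduced_ofDigits_eq hsurj ⟨g.y, g.z, (g.x + 2) / 6⟩
  have hag : ofDigits dig (a :: w) = g := by
    ext <;> simp only [ofDigits, hwg, ha]
    omega
  refine ⟨a :: w, isReduced_cons.mpr ⟨hw, ?_⟩, hag⟩
  rintro rfl ha0
  exact hg (by rw [← hag]; simp [ofDigits, ha0, Heis.one_def])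
-- Dividing by `θ` rotates the coordinates, so the weights must increase along the rotation.
termination_by 3 * g.x.natAbs + 4 * g.y.natAbs + 5 * g.z.natAbs
decreasing_by
  simp only [Heis.one_def, Heis.ext_iff] at hg
  omega

lemma bijOn_ofDigits (hdig : Set.BijOn dig Set.univ (Set.Icc (-2) 3)) :
    Set.BijOn (ofDigits dig) {w | IsReduced dig w} Set.univ := by
  have hmem (a : D) : -2 ≤ dig a ∧ dig a ≤ 3 := hdig.mapsTo (Set.mem_univ a)
  refine ⟨Set.mapsTo_univ _ _, injOn_ofDigits (Set.injOn_univ.mp hdig.injOn) (fun a => ?_)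
    fun a b => ?_, fun g _ => exists_isReduced_ofDigits_eq ?_ g⟩
  · have := hmem a
    rw [abs_lt]
    omega
  · have := hmem a
    have := hmem b
    rw [abs_lt]
    omega
  · rw [← Set.image_univ]
    exact hdig.surjOn

lemma natAbs_ofDigits_lt (hdig : ∀ a, |dig a| < 6) (w : List D) :
    (ofDigits dig w).x.natAbs < 6 ^ w.length ∧ (ofDigits dig w).y.natAbs < 6 ^ w.length ∧
      (ofDigits dig w).z.natAbs < 6 ^ w.length := by
  induction w with
  | nil => simp [ofDigits, Heis.one_def]
  | cons a w ih =>
    have ha := abs_lt.mp (hdig a)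
    simp only [ofDigits, List.length_cons, pow_succ]
    omega

/-- The digit of a possibly padding letter: padding a word amounts to appending zero digits. -/
def padDigit (dig : D → ℤ) (a : Option D) : ℤ := a.elim 0 dig

lemma abs_padDigit_le {d : ℕ} (hdig : ∀ a, |dig a| ≤ d) (a : Option D) :
    |padDigit dig a| ≤ d := by
  cases a with
  | none => simp [padDigit]
  | some a => exact hdig a

lemma ofDigits_conv_fst (u v : List D) :
    ofDigits (fun e => padDigit dig e.1) (conv u v) = ofDigits dig u := by
  fun_induction conv u v <;> simp_all [ofDigits, padDigit, Heis.one_def]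

lemma ofDigits_conv_snd (u v : List D) :
    ofDigits (fun e => padDigit dig e.2) (conv u v) = ofDigits dig v := by
  fun_induction conv u v <;> simp_all [ofDigits, padDigit, Heis.one_def]

end Digits

/-! ### Affine relations between expansions -/

section Affine

/-- The affine relations `h = g + N g + c` between triples, where `N` has the entries `6 j₁`, `6 j₂`
and `j₃` in the positions `(x, y)`, `(y, z)` and `(z, x)`. These are the matrices making the family
stable under removal of the least significant digits of `g` and `h`, which conjugates `N` by
multiplication by `θ`. -/
def AffineRel : ℤ × ℤ × ℤ → ℤ × ℤ × ℤ → Heis → Heis → Prop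
  | (j₁, j₂, j₃), (c₁, c₂, c₃), g, h =>
    h.x = g.x + 6 * (j₁ * g.y) + c₁ ∧ h.y = g.y + 6 * (j₂ * g.z) + c₂ ∧
      h.z = g.z + j₃ * g.x + c₃

variable {E : Type*} (δ ε : E → ℤ)

lemma affineRel_ofDigits_cons_iff {j₁ j₂ j₃ c₁ c₂ c₃ : ℤ} {e : E} {w : List E} :
    AffineRel (j₁, j₂, j₃) (c₁, c₂, c₃) (ofDigits δ (e :: w)) (ofDigits ε (e :: w)) ↔
      6 ∣ δ e + c₁ - ε e ∧
        AffineRel (j₂, j₃, j₁) (c₂, c₃ + j₃ * δ e, (δ e + c₁ - ε e) / 6)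
          (ofDigits δ w) (ofDigits ε w) := by
  simp only [AffineRel, ofDigits, mul_add, mul_left_comm j₃ 6]
  omega

/-- The words whose digit strings with respect to `δ` and `ε` satisfy an affine relation. -/
def affineLang (j c : ℤ × ℤ × ℤ) : Language E :=
  {w | AffineRel j c (ofDigits δ w) (ofDigits ε w)}

variable {δ ε}

lemma leftQuotient_affineLang_of_dvd {j₁ j₂ j₃ c₁ c₂ c₃ : ℤ} {e : E} (h : 6 ∣ δ e + c₁ - ε e) :
    (affineLang δ ε (j₁, j₂, j₃) (c₁, c₂, c₃)).leftQuotient [e] =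
      affineLang δ ε (j₂, j₃, j₁) (c₂, c₃ + j₃ * δ e, (δ e + c₁ - ε e) / 6) :=
  Language.ext fun _ => (affineRel_ofDigits_cons_iff δ ε).trans (and_iff_right h)

lemma leftQuotient_affineLang_of_not_dvd {j₁ j₂ j₃ c₁ c₂ c₃ : ℤ} {e : E}
    (h : ¬ 6 ∣ δ e + c₁ - ε e) :
    (affineLang δ ε (j₁, j₂, j₃) (c₁, c₂, c₃)).leftQuotient [e] = 0 :=
  Language.ext fun _ => iff_of_false (fun hw => h ((affineRel_ofDigits_cons_iff δ ε).mp hw).1) id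

/-- The carries reached by the automaton comparing two expansions with digits of absolute value at
most `d`, when the coefficients `j` are at most `J` in absolute value. -/
def carryBox (d J t : ℤ) : Set (ℤ × ℤ × ℤ) :=
  Set.Icc (-(t + d * J)) (t + d * J) ×ˢ Set.Icc (-(t + d * J)) (t + d * J) ×ˢ Set.Icc (-t) t

lemma next_mem_carryBox {d J t : ℤ} (ht : 2 * d + d * J ≤ 5 * t) {a b j c₁ c₂ c₃ : ℤ}
    (ha : |a| ≤ d) (hb : |b| ≤ d) (hj : |j| ≤ J) (hc : (c₁, c₂, c₃) ∈ carryBox d J t) :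
    (c₂, c₃ + j * a, (a + c₁ - b) / 6) ∈ carryBox d J t := by
  have hja : |j * a| ≤ d * J := by
    rw [abs_mul, mul_comm]
    exact mul_le_mul ha hj (abs_nonneg j) ((abs_nonneg a).trans ha)
  simp only [carryBox, Set.mem_prod, Set.mem_Icc, abs_le] at *
  omega

lemma isRegular_affineLang {d : ℕ} (hδ : ∀ e, |δ e| ≤ d) (hε : ∀ e, |ε e| ≤ d)
    (j c : ℤ × ℤ × ℤ) : (affineLang δ ε j c).IsRegular := by
  obtain ⟨j₁, j₂, j₃⟩ := j
  obtain ⟨c₁, c₂, c₃⟩ := c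
  let J : ℤ := max |j₁| (max |j₂| |j₃|)
  let C : ℤ := max |c₁| (max |c₂| |c₃|)
  let t : ℤ := d + d * J + C
  let coeffs : Set (ℤ × ℤ × ℤ) := Set.Icc (-J) J ×ˢ Set.Icc (-J) J ×ˢ Set.Icc (-J) J
  have hdJ : 0 ≤ d * J := mul_nonneg d.cast_nonneg (le_max_of_le_left (abs_nonneg j₁))
  have hC : 0 ≤ C := le_max_of_le_left (abs_nonneg c₁)
  have hcoeffs : coeffs.Finite :=
    (Set.finite_Icc _ _).prod ((Set.finite_Icc _ _).prod (Set.finite_Icc _ _))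
  have hcarries : (carryBox d J t).Finite :=
    (Set.finite_Icc _ _).prod ((Set.finite_Icc _ _).prod (Set.finite_Icc _ _))
  refine isRegular_of_mem_finite ((hcoeffs.image2 (affineLang δ ε) hcarries).insert 0) ?_
    (.inr (Set.mem_image2_of_mem ?_ ?_))
  · rintro _ (rfl | ⟨⟨k₁, k₂, k₃⟩, ⟨hk₁, hk₂, hk₃⟩, ⟨b₁, b₂, b₃⟩, hb, rfl⟩) e
    · exact .inl rfl
    by_cases h : 6 ∣ δ e + b₁ - ε e
    · rw [leftQuotient_affineLang_of_dvd h]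
      exact .inr (Set.mem_image2_of_mem ⟨hk₂, hk₃, hk₁⟩
        (next_mem_carryBox (by omega) (hδ e) (hε e) (abs_le.mpr hk₃) hb))
    · exact .inl (leftQuotient_affineLang_of_not_dvd h)
  · simp only [coeffs, Set.mem_prod, Set.mem_Icc, ← abs_le]
    omega
  · simp only [carryBox, Set.mem_prod, Set.mem_Icc, ← abs_le]
    omega

lemma isRegularRel_affineRel {D : Type*} {dig : D → ℤ} {d : ℕ} (hdig : ∀ a, |dig a| ≤ d)
    {L : Language D} (hL : L.IsRegular) (j c : ℤ × ℤ × ℤ) :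
    IsRegularRel {p : List D × List D |
      p.1 ∈ L ∧ p.2 ∈ L ∧ AffineRel j c (ofDigits dig p.1) (ofDigits dig p.2)} := by
  refine isRegularRel_of_conv_mem_iff
    (R := fun u v => AffineRel j c (ofDigits dig u) (ofDigits dig v)) hL hL
    (isRegular_affineLang (fun e : Option D × Option D => abs_padDigit_le hdig e.1)
      (fun e => abs_padDigit_le hdig e.2) j c) fun u v => ?_
  change AffineRel j c _ _ ↔ _
  rw [ofDigits_conv_fst, ofDigits_conv_snd]

end Affine

/-! ### Word length -/

section WordLength

variable {G : Type*} [Group G] {A : Set G} {m n : ℕ} {g h : G}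

lemma eval_cons (a : Alph A) (w : List (Alph A)) : eval A (a :: w) = a.1 * eval A w :=
  List.prod_cons

lemma eval_append (u v : List (Alph A)) : eval A (u ++ v) = eval A u * eval A v :=
  (congrArg List.prod List.map_append).trans List.prod_append

/-- The ball of radius `n` around `1` in the Cayley graph. The set `{g | wordLength A g ≤ n}` would
not do, as `wordLength` takes the junk value `0` outside the subgroup generated by `A`. -/
def wordBall (A : Set G) (n : ℕ) : Set G := {g | ∃ w : List (Alph A), eval A w = g ∧ w.length ≤ n}

lemma eval_mem_wordBall (w : List (Alph A)) : eval A w ∈ wordBall A w.length := ⟨w, rfl, le_rfl⟩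

lemma wordLength_le_of_mem_wordBall (hg : g ∈ wordBall A n) : wordLength A g ≤ n := by
  obtain ⟨w, hw, hn⟩ := hg
  exact le_trans (Nat.sInf_le ⟨w, hw, rfl⟩) hn

lemma one_mem_wordBall : (1 : G) ∈ wordBall A 0 := eval_mem_wordBall []

lemma letter_mem_wordBall (hg : g ∈ A ∪ A⁻¹) : g ∈ wordBall A 1 :=
  ⟨[(⟨g, hg⟩ : Alph A)], List.prod_singleton, le_rfl⟩

lemma mul_mem_wordBall (hg : g ∈ wordBall A m) (hh : h ∈ wordBall A n) :
    g * h ∈ wordBall A (m + n) := by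
  obtain ⟨u, rfl, hu⟩ := hg
  obtain ⟨v, rfl, hv⟩ := hh
  exact ⟨u ++ v, eval_append u v, by rw [List.length_append]; gcongr⟩

lemma inv_mem_wordBall (hg : g ∈ wordBall A n) : g⁻¹ ∈ wordBall A n := by
  obtain ⟨w, rfl, hw⟩ := hg
  induction w generalizing n with
  | nil => exact ⟨([] : List (Alph A)), inv_one.symm, hw⟩
  | cons a w ih =>
    obtain ⟨n, rfl⟩ := Nat.exists_eq_add_of_le' (Nat.one_le_of_lt hw)
    rw [eval_cons, mul_inv_rev]
    refine mul_mem_wordBall (ih (Nat.le_of_succ_le_succ hw)) (letter_mem_wordBall ?_)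
    rw [← Set.mem_inv, Set.union_inv, inv_inv, Set.union_comm]
    exact a.2

lemma pow_mem_wordBall (hg : g ∈ wordBall A m) (n : ℕ) : g ^ n ∈ wordBall A (n * m) := by
  induction n with
  | zero => simpa using one_mem_wordBall
  | succ n ih =>
    rw [pow_succ, Nat.succ_mul]
    exact mul_mem_wordBall ih hg

lemma zpow_mem_wordBall (hg : g ∈ wordBall A m) (k : ℤ) : g ^ k ∈ wordBall A (k.natAbs * m) := by
  obtain ⟨n, rfl | rfl⟩ := k.eq_nat_or_neg
  · simpa using pow_mem_wordBall hg n
  · simpa using inv_mem_wordBall (pow_mem_wordBall hg n)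

lemma inB_expF_of_le_mul_pow {L : Language (Alph A)} {ψ : List (Alph A) → G}
    (hψ : IsCayleyAutomaticRep A L ψ) (K b : ℕ)
    (hdist : ∀ w ∈ L, cayleyDist A (eval A w) (ψ w) ≤ K * b ^ w.length) : InB A expF := by
  refine ⟨L, ψ, hψ, K + 1, b + 1, 1, K.succ_pos, b.succ_pos, one_pos, le_rfl,
    fun n _ w hw hn => ?_⟩
  calc (cayleyDist A (eval A w) (ψ w) : ℝ)
      ≤ K * (b : ℝ) ^ w.length := mod_cast hdist w hw
    _ ≤ (K + 1 : ℕ) * ((b + 1 : ℕ) : ℝ) ^ n := by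
        norm_cast
        gcongr ?_ * ?_
        · exact K.le_succ
        · exact (Nat.pow_le_pow_left b.le_succ _).trans (Nat.pow_le_pow_right b.succ_pos hn)
    _ ≤ (K + 1 : ℕ) * Real.exp (b + 1 : ℕ) ^ n := by
        gcongr
        exact (lt_add_one _).le.trans (Real.add_one_le_exp _)
    _ = (K + 1 : ℕ) * expF.toFun ((b + 1) * n) := by
        simp only [expF, ← Real.exp_nat_mul, Nat.cast_mul, mul_comm]

end WordLength

/-! ### The Heisenberg group -/

lemma Heis.zpow_eq_of_x_mul_y_eq_zero {g : Heis} (hg : g.x * g.y = 0) (k : ℤ) :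
    g ^ k = ⟨k * g.x, k * g.y, k * g.z⟩ := by
  induction k with
  | zero => simp [Heis.one_def]
  | succ n ih =>
    rw [zpow_add_one, ih, Heis.mul_def]
    ext <;> dsimp only
    · ring
    · ring
    · linear_combination (n : ℤ) * hg
  | pred n ih =>
    rw [zpow_sub_one, ih, Heis.mul_def, Heis.inv_def]
    ext <;> dsimp only
    · ring
    · ring
    · linear_combination (n + 1 : ℤ) * hg

lemma Heis.s_zpow_mul_p_zpow_mul_q_zpow (g : Heis) :
    Heis.s ^ g.x * Heis.p ^ g.y * Heis.q ^ (g.z - g.x * g.y) = g := by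
  simp [Heis.zpow_eq_of_x_mul_y_eq_zero, Heis.s, Heis.p, Heis.q, Heis.mul_def]

/-- The generating set `{s, p, q}` of `ℋ₃(ℤ)`. -/
abbrev heisGens : Set Heis := {Heis.s, Heis.p, Heis.q}

lemma mem_wordBall_heisGens (g : Heis) :
    g ∈ wordBall heisGens (g.x.natAbs + g.y.natAbs + (g.z - g.x * g.y).natAbs) := by
  have hzpow {a : Heis} (ha : a ∈ heisGens) (k : ℤ) : a ^ k ∈ wordBall heisGens k.natAbs := by
    simpa using zpow_mem_wordBall (letter_mem_wordBall (.inl ha)) k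
  have hg := mul_mem_wordBall
    (mul_mem_wordBall (hzpow (.inl rfl) g.x) (hzpow (.inr (.inl rfl)) g.y))
    (hzpow (.inr (.inr rfl)) (g.z - g.x * g.y))
  rwa [g.s_zpow_mul_p_zpow_mul_q_zpow] at hg

/-- The bijection from letters to digits: `s⁻¹, p⁻¹, q⁻¹` correspond to `-1, -2, 0` and `s, p, q` to
`1, 2, 3`. -/
def letterDigit (a : Alph heisGens) : ℤ := a.1.x + 2 * a.1.y + 3 * max a.1.z 0

lemma mem_heisGens_union_inv_iff {g : Heis} : g ∈ heisGens ∪ heisGens⁻¹ ↔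
    (g = ⟨1, 0, 0⟩ ∨ g = ⟨0, 1, 0⟩ ∨ g = ⟨0, 0, 1⟩) ∨
      g = ⟨-1, 0, 0⟩ ∨ g = ⟨0, -1, 0⟩ ∨ g = ⟨0, 0, -1⟩ := by
  simp only [Set.mem_union, Set.mem_inv, Set.mem_insert_iff, Set.mem_singleton_iff,
    inv_eq_iff_eq_inv]
  rfl

lemma bijOn_letterDigit : Set.BijOn letterDigit Set.univ (Set.Icc (-2) 3) := by
  refine ⟨?_, ?_, ?_⟩
  · rintro ⟨g, hg⟩ -
    rcases mem_heisGens_union_inv_iff.mp hg with (rfl | rfl | rfl) | rfl | rfl | rfl <;>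
      simp [letterDigit]
  · rintro ⟨g, hg⟩ - ⟨h, hh⟩ - heq
    refine Subtype.ext ?_
    rcases mem_heisGens_union_inv_iff.mp hg with (rfl | rfl | rfl) | rfl | rfl | rfl <;>
      rcases mem_heisGens_union_inv_iff.mp hh with (rfl | rfl | rfl) | rfl | rfl | rfl <;>
      simp [letterDigit] at heq ⊢
  · have hletter (g : Heis) (hg : g ∈ heisGens ∪ heisGens⁻¹) :
        g.x + 2 * g.y + 3 * max g.z 0 ∈ letterDigit '' Set.univ := ⟨⟨g, hg⟩, trivial, rfl⟩
    simp only [mem_heisGens_union_inv_iff, or_imp, forall_and, forall_eq] at hletter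
    obtain ⟨⟨hs, hp, hq⟩, hs', hp', hq'⟩ := hletter
    rintro n ⟨hn, hn'⟩
    interval_cases n
    exacts [hp', hs', hq', hs, hp, hq]

lemma abs_letterDigit_le (a : Alph heisGens) : |letterDigit a| ≤ 3 := by
  obtain ⟨h, h'⟩ := bijOn_letterDigit.mapsTo (Set.mem_univ a)
  exact abs_le.mpr ⟨by omega, h'⟩

lemma exists_affineRel_iff_eq_mul {a : Heis} (ha : a ∈ heisGens) :
    ∃ j c, ∀ g h : Heis, AffineRel j c g h ↔ h = g * a := by
  rcases ha with rfl | rfl | rfl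
  · exact ⟨(0, 0, 0), (1, 0, 0), by simp [AffineRel, Heis.ext_iff, Heis.mul_def, Heis.s]⟩
  · exact ⟨(0, 0, 1), (0, 1, 0), by simp [AffineRel, Heis.ext_iff, Heis.mul_def, Heis.p]⟩
  · exact ⟨(0, 0, 0), (0, 0, 1), by simp [AffineRel, Heis.ext_iff, Heis.mul_def, Heis.q]⟩

lemma isCayleyAutomaticRep_ofDigits :
    IsCayleyAutomaticRep heisGens {w | IsReduced letterDigit w} (ofDigits letterDigit) := by
  refine ⟨isRegular_setOf_isReduced, bijOn_ofDigits bijOn_letterDigit, fun a ha => ?_⟩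
  obtain ⟨j, c, hjc⟩ := exists_affineRel_iff_eq_mul ha
  simpa only [hjc] using
    isRegularRel_affineRel (d := 3) abs_letterDigit_le isRegular_setOf_isReduced j c

lemma cayleyDist_ofDigits_le (w : List (Alph heisGens)) :
    cayleyDist heisGens (eval heisGens w) (ofDigits letterDigit w) ≤ 5 * 36 ^ w.length := by
  set n := w.length
  set g := ofDigits letterDigit w
  obtain ⟨hx, hy, hz⟩ : g.x.natAbs < 6 ^ n ∧ g.y.natAbs < 6 ^ n ∧ g.z.natAbs < 6 ^ n :=
    natAbs_ofDigits_lt (fun a => (abs_letterDigit_le a).trans_lt (by norm_num)) w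
  calc cayleyDist heisGens (eval heisGens w) g
      ≤ n + (g.x.natAbs + g.y.natAbs + (g.z - g.x * g.y).natAbs) :=
        wordLength_le_of_mem_wordBall
          (mul_mem_wordBall (inv_mem_wordBall (eval_mem_wordBall w)) (mem_wordBall_heisGens g))
    _ ≤ n + (g.x.natAbs + g.y.natAbs + (g.z.natAbs + g.x.natAbs * g.y.natAbs)) := by
        gcongr
        exact (Int.natAbs_sub_le _ _).trans_eq (by rw [Int.natAbs_mul])
    _ ≤ 6 ^ n + (6 ^ n + 6 ^ n + (6 ^ n + 6 ^ n * 6 ^ n)) := by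
        have : n < 6 ^ n := Nat.lt_pow_self (by norm_num)
        gcongr
    _ ≤ 5 * (6 ^ n * 6 ^ n) := by
        have : 6 ^ n ≤ 6 ^ n * 6 ^ n := Nat.le_mul_self _
        omega
    _ = 5 * 36 ^ n := by rw [← mul_pow]; norm_num

end CAG

open CAG in
/-- The Heisenberg group `ℋ₃(ℤ)` belongs to the class `ℬ_𝔢`, where `𝔢(n) = exp n` is the
exponential function. -/
theorem heisenberg_mem_classB_exp :
    InB ({Heis.s, Heis.p, Heis.q} : Set Heis) expF :=
  inB_expF_of_le_mul_pow isCayleyAutomaticRep_ofDigits 5 36 fun w _ => cayleyDist_ofDigits_le w
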